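/- Let ζ be the Riemann zeta function and define w : ℕ → ℂ by w(k) = 1/ζ(k) for k ≥ 2, w(1) = 0, and w(0) = 1/ζ(0) = −2 (the values of the meromorphic function 1/ζ at the non-negative integers, with 1/ζ(1) = 0 since ζ has a pole at 1). Then for every s ∈ ℂ with Re s > 1, the Newton series ∑_{n=0}^∞ (∑_{k=0}^n P_k(n)·w(k))·P_n(s) converges and its sum equals 1/ζ(s). -/

import Mathlib

open Filter Finset Topology

/-- The `n`-th Pochhammer–Newton polynomial `P_n(α) = ((-1)^n / n!) ∏_{m=0}^{n-1} (α - m)`. -/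
noncomputable def pochNewton (n : ℕ) (α : ℂ) : ℂ :=
  ((-1 : ℂ) ^ n / (n.factorial : ℂ)) * ∏ m ∈ Finset.range n, (α - (m : ℂ))

/-- The values of `1/ζ` at the non-negative integers, with `w(1) = 0` (since `ζ` has a pole
at `1`); in particular `w(0) = 1/ζ(0) = -2`. -/
noncomputable def recipZetaValue (k : ℕ) : ℂ :=
  if k = 1 then 0 else (riemannZeta k)⁻¹

theorem pn_zero (s : ℂ) : pochNewton 0 s = 1 := by simp [pochNewton]

theorem pn_succ (n : ℕ) (s : ℂ) :
    pochNewton (n + 1) s = pochNewton n s * (((n : ℂ) - s) / (n + 1)) := by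
  have h1 : ((n : ℂ) + 1) ≠ 0 := by exact_mod_cast Nat.succ_ne_zero n
  have h2 : (n.factorial : ℂ) ≠ 0 := by exact_mod_cast n.factorial_ne_zero
  unfold pochNewton
  rw [Finset.prod_range_succ, Nat.factorial_succ, pow_succ]
  push_cast
  field_simp
  ring

theorem pn_succ' (n : ℕ) (s : ℂ) :
    ((n : ℂ) + 1) * pochNewton (n + 1) s = -s * pochNewton n (s - 1) := by
  have h1 : ((n : ℂ) + 1) ≠ 0 := by exact_mod_cast Nat.succ_ne_zero n
  have h2 : (n.factorial : ℂ) ≠ 0 := by exact_mod_cast n.factorial_ne_zero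
  unfold pochNewton
  rw [Finset.prod_range_succ', Nat.factorial_succ, pow_succ]
  have : ∀ m ∈ Finset.range n, s - ((m + 1 : ℕ) : ℂ) = s - 1 - (m : ℂ) := by
    intro m _; push_cast; ring
  rw [Finset.prod_congr rfl this]
  push_cast
  field_simp
  ring

theorem pn_sum (n : ℕ) (s : ℂ) :
    ∑ k ∈ Finset.range (n + 1), pochNewton k s = pochNewton n (s - 1) := by
  induction n with
  | zero => simp [pn_zero]
  | succ n ih =>
    have h1 : ((n : ℂ) + 1) ≠ 0 := by exact_mod_cast Nat.succ_ne_zero n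
    rw [Finset.sum_range_succ, ih, pn_succ n (s - 1)]
    have h := pn_succ' n s
    have : pochNewton (n + 1) s = -s * pochNewton n (s - 1) / (n + 1) := by
      rw [← h]; field_simp
    rw [this]; field_simp; ring

theorem pn_nat (n k : ℕ) : pochNewton k (n : ℂ) = (-1) ^ k * (n.choose k : ℂ) := by
  have h2 : (k.factorial : ℂ) ≠ 0 := by exact_mod_cast k.factorial_ne_zero
  unfold pochNewton
  rw [← descPochhammer_eval_eq_prod_range, descPochhammer_eval_eq_descFactorial,
    Nat.descFactorial_eq_factorial_mul_choose]
  push_cast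
  field_simp

theorem pn_choose (n : ℕ) (s : ℂ) : pochNewton n s = (-1) ^ n * Ring.choose s n := by
  unfold pochNewton
  rw [Ring.choose_eq_smul, ← descPochhammer_eval_eq_prod_range]
  rw [Polynomial.descPochhammer_smeval_eq_ascPochhammer,
    Polynomial.ascPochhammer_smeval_cast, Polynomial.ascPochhammer_smeval_eq_eval,
    descPochhammer_eval_eq_ascPochhammer]
  simp only [smul_eq_mul]
  ring

theorem pn_binom (s : ℂ) (x : ℂ) (hx : ‖x‖ < 1) :
    HasSum (fun n => x ^ n * pochNewton n s) ((1 - x) ^ s) := by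
  have h := (Complex.one_add_cpow_hasFPowerSeriesOnBall_zero (a := s)).hasSum (y := -x)
    (by rw [← ENNReal.ofReal_one, Metric.eball_ofReal]; simpa using hx)
  simp only [binomialSeries_apply] at h
  convert! h using 1
  · ext n
    simp only [pn_choose, List.ofFn_const, List.prod_replicate, smul_eq_mul]
    rw [neg_pow]; ring
  · simp [sub_eq_add_neg]

theorem pn_bdd (s : ℂ) : ∃ B : ℝ, 0 ≤ B ∧ ∀ n : ℕ,
    ‖((n : ℂ) ^ (-s))⁻¹ * ((n + 1 : ℂ) * pochNewton (n + 1) s)‖ ≤ B := by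
  have key : ∀ n : ℕ, ((n : ℂ) ^ (-s))⁻¹ * ((n + 1 : ℂ) * pochNewton (n + 1) s)
      = (Complex.GammaSeq (-s) n)⁻¹ := by
    intro n
    have h1 : ((n : ℂ) + 1) ≠ 0 := by exact_mod_cast Nat.succ_ne_zero n
    have h2 : (n.factorial : ℂ) ≠ 0 := by exact_mod_cast n.factorial_ne_zero
    unfold Complex.GammaSeq pochNewton
    have : ∏ j ∈ Finset.range (n + 1), (-s + (j : ℂ))
        = (-1) ^ (n + 1) * ∏ j ∈ Finset.range (n + 1), (s - (j : ℂ)) := by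
      rw [← Finset.card_range (n + 1), ← Finset.prod_const, Finset.card_range,
        ← Finset.prod_mul_distrib]
      exact Finset.prod_congr rfl fun j _ => by ring
    rw [this, Nat.factorial_succ, inv_div, div_eq_mul_inv _ ((n : ℂ) ^ (-s) * _), mul_inv]
    push_cast
    field_simp
  have hb : Bornology.IsBounded (Set.range fun n : ℕ =>
      ((n : ℂ) ^ (-s))⁻¹ * ((n + 1 : ℂ) * pochNewton (n + 1) s)) := by
    by_cases hG : Complex.Gamma (-s) = 0
    · rw [Complex.Gamma_eq_zero_iff] at hG
      obtain ⟨m, hm⟩ := hG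
      have hm : s = m := neg_injective hm
      apply Metric.isBounded_range_of_tendsto (x := 0)
      apply tendsto_const_nhds.congr'
      filter_upwards [eventually_ge_atTop m] with n hn
      rw [hm, pn_nat, Nat.choose_eq_zero_of_lt (by omega)]
      simp
    · refine Metric.isBounded_range_of_tendsto _ (x := (Complex.Gamma (-s))⁻¹) ?_
      simp only [key]
      exact (Complex.GammaSeq_tendsto_Gamma (-s)).inv₀ hG
  obtain ⟨B, hB⟩ := hb.exists_norm_le
  exact ⟨B, (norm_nonneg _).trans (hB _ ⟨0, rfl⟩), fun n => hB _ ⟨n, rfl⟩⟩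

theorem pn_bound (s : ℂ) (hs : 0 < s.re) : ∃ C : ℝ, 0 ≤ C ∧ ∀ n : ℕ, n ≠ 0 →
    ‖pochNewton n s‖ ≤ C * (n : ℝ) ^ (-(s.re + 1)) := by
  obtain ⟨B, hB0, hB⟩ := pn_bdd s
  refine ⟨max (B * 2 ^ s.re) ‖s‖, le_max_of_le_right (norm_nonneg _), ?_⟩
  intro n hn
  obtain ⟨n, rfl⟩ := Nat.exists_eq_succ_of_ne_zero hn
  rcases Nat.eq_zero_or_pos n with rfl | hpos
  · simp [pn_succ, pn_zero]
  have hn0 : (0 : ℝ) < n := by exact_mod_cast hpos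
  have hn1 : (1 : ℝ) ≤ n := by exact_mod_cast hpos
  have h := hB n
  rw [norm_mul, norm_inv, Complex.norm_natCast_cpow_of_pos hpos, Complex.neg_re,
    Real.rpow_neg hn0.le, inv_inv, norm_mul] at h
  have e : ‖(n + 1 : ℂ)‖ = (n : ℝ) + 1 := by
    have := Complex.norm_natCast (n + 1)
    push_cast at this; exact this
  rw [e] at h
  have h2 : ((n : ℝ) + 1) ^ s.re ≤ 2 ^ s.re * (n : ℝ) ^ s.re := by
    rw [← Real.mul_rpow (by norm_num) hn0.le]
    exact Real.rpow_le_rpow (by positivity) (by linarith) hs.le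
  have hc : (((n.succ : ℕ) : ℝ)) = (n : ℝ) + 1 := by push_cast; ring
  rw [hc, Real.rpow_neg (by positivity), Real.rpow_add (by positivity), Real.rpow_one,
    ← div_eq_mul_inv, le_div_iff₀ (by positivity)]
  refine le_trans ?_ (le_max_left _ _)
  have h3 : ‖pochNewton n.succ s‖ * (((n : ℝ) + 1) ^ s.re * ((n : ℝ) + 1))
      ≤ ‖pochNewton n.succ s‖ * ((2 ^ s.re * (n : ℝ) ^ s.re) * ((n : ℝ) + 1)) := by
    gcongr
  refine h3.trans ?_
  have h4 : (2 : ℝ) ^ s.re * ((n : ℝ) ^ s.re * (((n : ℝ) + 1) * ‖pochNewton (n + 1) s‖)) ≤ 2 ^ s.re * B := by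
    gcongr
  calc _ = (2 : ℝ) ^ s.re * ((n : ℝ) ^ s.re * (((n : ℝ) + 1) * ‖pochNewton (n + 1) s‖)) := by
        simp only [Nat.succ_eq_add_one]; ring
    _ ≤ _ := by rw [mul_comm B]; exact h4

theorem pn_summable (s : ℂ) (hs : 0 < s.re) : Summable (fun n => pochNewton n s) := by
  obtain ⟨C, _, hC⟩ := pn_bound s hs
  rw [← summable_nat_add_iff 1]
  have h : Summable fun n : ℕ => C * (n : ℝ) ^ (-(s.re + 1)) :=
    (Real.summable_nat_rpow.mpr (by linarith)).mul_left C
  exact Summable.of_norm_bounded ((summable_nat_add_iff 1).mpr h) fun n => hC _ (by omega)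

theorem pn_tendsto (s : ℂ) (hs : -1 < s.re) :
    Tendsto (fun n => pochNewton n s) atTop (𝓝 0) := by
  obtain ⟨B, hB0, hB⟩ := pn_bdd s
  have h := (pn_succ' · (s + 1))
  obtain ⟨C, _, hC⟩ := pn_bound (s + 1) (by simp; linarith)
  have hs1 : s + 1 ≠ 0 := by
    intro h; have := congrArg Complex.re h; simp at this; linarith
  -- (n+1) P_{n+1}(s+1) = -(s+1) P_n(s)
  have hb : ∀ n : ℕ, ‖pochNewton n s‖ ≤ (C / ‖s + 1‖) * ((n + 1 : ℕ) : ℝ) ^ (-(s.re + 1)) := by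
    intro n
    have h1 := h n
    rw [add_sub_cancel_right] at h1
    have h2 := congrArg norm h1
    rw [norm_mul, norm_mul, norm_neg] at h2
    have e : ‖(n + 1 : ℂ)‖ = (n : ℝ) + 1 := by
      have := Complex.norm_natCast (n + 1)
      push_cast at this; exact this
    have h3 := hC (n + 1) (by omega)
    have hp : (0 : ℝ) < ((n + 1 : ℕ) : ℝ) := by positivity
    rw [div_mul_eq_mul_div, le_div_iff₀ (norm_pos_iff.mpr hs1), mul_comm, ← h2, e]
    have h5 : ((n + 1 : ℕ) : ℝ) ^ (-(s.re + 1)) =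
        ((n + 1 : ℕ) : ℝ) * ((n + 1 : ℕ) : ℝ) ^ (-((s + 1).re + 1)) := by
      rw [← Real.rpow_one_add' hp.le (by simp; linarith)]
      congr 1; simp
    rw [h5]
    push_cast at h3 ⊢
    have : ((n : ℝ) + 1) * ‖pochNewton (n + 1) (s + 1)‖ ≤ ((n : ℝ) + 1) * _ :=
      mul_le_mul_of_nonneg_left h3 (by positivity)
    refine this.trans (le_of_eq (by ring))
  apply squeeze_zero_norm hb
  have := ((tendsto_rpow_neg_atTop (y := s.re + 1) (by linarith)).comp
    (tendsto_natCast_atTop_atTop (R := ℝ))).comp (tendsto_add_atTop_nat 1)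
  simpa using this.const_mul (C / ‖s + 1‖)

theorem pn_hasSum (s : ℂ) (hs : 0 < s.re) : HasSum (fun n => pochNewton n s) 0 := by
  rw [(pn_summable s hs).hasSum_iff_tendsto_nat, ← tendsto_add_atTop_iff_nat 1]
  simp only [pn_sum]
  exact pn_tendsto _ (by simp; linarith)

theorem pn_hasSum_mul (s : ℂ) (hs : 1 < s.re) :
    HasSum (fun n : ℕ => (n : ℂ) * pochNewton n s) 0 := by
  rw [← hasSum_nat_add_iff' 1]
  have := (pn_hasSum (s - 1) (by simp; linarith)).mul_left (-s)
  simpa [pn_succ'] using this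

noncomputable def gK (n m : ℕ) : ℝ := (1 - (m : ℝ)⁻¹) ^ n - 1 + n * (m : ℝ)⁻¹

theorem gK_nonneg (n m : ℕ) : 0 ≤ gK n m := by
  have hx : (m : ℝ)⁻¹ ≤ 1 := Nat.cast_inv_le_one m
  have := one_add_mul_le_pow (a := -(m : ℝ)⁻¹) (by linarith) n
  unfold gK
  rw [← sub_eq_add_neg] at this
  linarith

theorem gK_le_lin (n m : ℕ) : gK n m ≤ n * (m : ℝ)⁻¹ := by
  have hx : (m : ℝ)⁻¹ ≤ 1 := Nat.cast_inv_le_one m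
  have hx0 : 0 ≤ (m : ℝ)⁻¹ := by positivity
  have := pow_le_one₀ (n := n) (a := 1 - (m : ℝ)⁻¹) (by linarith) (by linarith)
  unfold gK
  linarith

theorem gK_le_sq (n m : ℕ) : gK n m ≤ (n * (m : ℝ)⁻¹) ^ 2 := by
  have hx : (m : ℝ)⁻¹ ≤ 1 := Nat.cast_inv_le_one m
  have hx0 : 0 ≤ (m : ℝ)⁻¹ := by positivity
  induction n with
  | zero => simp [gK]
  | succ n ih =>
    have hl := gK_le_lin n m
    have h0 := gK_nonneg n m
    have e : gK (n + 1) m = (1 - (m : ℝ)⁻¹) * gK n m + n * (m : ℝ)⁻¹ ^ 2 := by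
      unfold gK; push_cast; ring
    have : (1 - (m : ℝ)⁻¹) * gK n m ≤ gK n m := by nlinarith
    rw [e]
    push_cast
    have hn : (0 : ℝ) ≤ n := by positivity
    nlinarith [mul_nonneg hn (sq_nonneg (m : ℝ)⁻¹), sq_nonneg (m : ℝ)⁻¹]

theorem gK_le (n m : ℕ) (p : ℝ) (hp1 : 1 ≤ p) (hp2 : p ≤ 2) :
    gK n m ≤ (n : ℝ) ^ p * (m : ℝ) ^ (-p) := by
  rw [Real.rpow_neg (by positivity), ← Real.inv_rpow (by positivity),
    ← Real.mul_rpow (by positivity) (by positivity)]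
  have h1 := gK_le_lin n m
  have h2 := gK_le_sq n m
  set a := (n : ℝ) * (m : ℝ)⁻¹ with ha
  have ha0 : 0 ≤ a := by positivity
  rcases le_total a 1 with h | h
  · rcases ha0.eq_or_lt with h0 | h0
    · rw [← h0, Real.zero_rpow (by linarith)]; rw [← h0] at h1; exact h1
    refine h2.trans ?_
    rw [← Real.rpow_natCast]
    exact Real.rpow_le_rpow_of_exponent_ge h0 h (by exact_mod_cast hp2)
  · refine h1.trans ?_
    conv_lhs => rw [← Real.rpow_one a]
    exact Real.rpow_le_rpow_of_exponent_le h hp1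

theorem moebius_hasSum (s : ℂ) (hs : 1 < s.re) :
    HasSum (fun m : ℕ => (ArithmeticFunction.moebius m : ℂ) * (m : ℂ) ^ (-s))
      (riemannZeta s)⁻¹ := by
  have h := (ArithmeticFunction.LSeriesSummable_moebius_iff.mpr hs).LSeriesHasSum
  have h1 := ArithmeticFunction.LSeries_zeta_mul_Lseries_moebius hs
  rw [ArithmeticFunction.LSeries_zeta_eq_riemannZeta hs] at h1
  rw [eq_inv_of_mul_eq_one_right h1] at h
  unfold LSeriesHasSum at h
  convert! h using 1
  ext m
  rcases eq_or_ne m 0 with rfl | hm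
  · simp
  · rw [LSeries.term_of_ne_zero hm, Complex.cpow_neg, div_eq_mul_inv]

theorem gK_eq (n m : ℕ) : (gK n m : ℂ) =
    ∑ k ∈ Finset.range (n + 1), if 2 ≤ k then pochNewton k n * ((m : ℂ)⁻¹) ^ k else 0 := by
  have h : (1 - (m : ℂ)⁻¹) ^ n = ∑ k ∈ Finset.range (n + 1), pochNewton k n * ((m : ℂ)⁻¹) ^ k := by
    rw [sub_eq_neg_add, add_pow]
    refine Finset.sum_congr rfl fun k _ => ?_
    rw [pn_nat, neg_pow]; simp; ring
  unfold gK
  push_cast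
  rw [h]
  rcases n with _ | n
  · simp [pn_zero]
  rw [Finset.sum_range_succ', Finset.sum_range_succ', Finset.sum_range_succ',
    Finset.sum_range_succ']
  have e1 : pochNewton (0 + 1) ((n + 1 : ℕ) : ℂ) = -((n : ℂ) + 1) := by
    rw [pn_nat]; simp
  rw [e1, pn_zero, if_neg (by norm_num), if_neg (by norm_num)]
  have e2 : ∀ k ∈ Finset.range n, (if 2 ≤ k + 1 + 1 then
      pochNewton (k + 1 + 1) ((n + 1 : ℕ) : ℂ) * ((m : ℂ)⁻¹) ^ (k + 1 + 1) else 0)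
      = pochNewton (k + 1 + 1) ((n + 1 : ℕ) : ℂ) * ((m : ℂ)⁻¹) ^ (k + 1 + 1) :=
    fun k _ => if_pos (by omega)
  rw [Finset.sum_congr rfl e2]
  push_cast
  ring

theorem coeff_hasSum (n : ℕ) :
    HasSum (fun m : ℕ => (ArithmeticFunction.moebius m : ℂ) * (gK n m : ℂ))
      ((∑ k ∈ Finset.range (n + 1), pochNewton k (n : ℂ) * recipZetaValue k)
        - recipZetaValue 0) := by
  have h : (∑ k ∈ Finset.range (n + 1), pochNewton k (n : ℂ) * recipZetaValue k)
        - recipZetaValue 0 = ∑ k ∈ Finset.range (n + 1),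
          if 2 ≤ k then pochNewton k (n : ℂ) * (riemannZeta k)⁻¹ else 0 := by
    rw [Finset.sum_range_succ', Finset.sum_range_succ']
    rw [pn_zero]
    simp only [one_mul, add_sub_cancel_right]
    rw [if_neg (by norm_num), add_zero]
    refine Finset.sum_congr rfl fun k _ => ?_
    rcases k with _ | k
    · simp [recipZetaValue]
    · rw [if_pos (by omega), recipZetaValue, if_neg (by omega)]
  rw [h]
  simp only [gK_eq, Finset.mul_sum]
  refine hasSum_sum fun k _ => ?_
  by_cases hk : 2 ≤ k
  · simp only [if_pos hk]
    have := (moebius_hasSum k (by simp; omega)).mul_left (pochNewton k (n : ℂ))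
    convert! this using 1
    ext m
    rw [Complex.cpow_neg, Complex.cpow_natCast, inv_pow]; ring
  · simp only [if_neg hk, mul_zero]
    exact hasSum_zero

theorem col_hasSum (s : ℂ) (hs : 1 < s.re) (m : ℕ) :
    HasSum (fun n : ℕ => (ArithmeticFunction.moebius m : ℂ) * (gK n m : ℂ) * pochNewton n s)
      ((ArithmeticFunction.moebius m : ℂ) * (m : ℂ) ^ (-s)) := by
  rcases eq_or_ne m 0 with rfl | hm
  · simp [hasSum_zero]
  have hm1 : (1 : ℝ) ≤ m := by exact_mod_cast Nat.one_le_iff_ne_zero.mpr hm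
  have hx1 : (m : ℝ)⁻¹ ≤ 1 := Nat.cast_inv_le_one m
  have hx0 : 0 < (m : ℝ)⁻¹ := by positivity
  have hx : ‖(1 - (m : ℂ)⁻¹)‖ < 1 := by
    have e : (1 - (m : ℂ)⁻¹) = ((1 - (m : ℝ)⁻¹ : ℝ) : ℂ) := by push_cast; ring
    rw [e, Complex.norm_real, Real.norm_eq_abs, abs_lt]
    constructor <;> linarith
  have h1 := pn_binom s _ hx
  have h2 := pn_hasSum s (by linarith)
  have h3 := (pn_hasSum_mul s hs).mul_left (m : ℂ)⁻¹
  have h4 := ((h1.sub h2).add h3).mul_left (ArithmeticFunction.moebius m : ℂ)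
  convert! h4 using 1
  · ext n; unfold gK; push_cast; ring
  · have : (1 - (1 - (m : ℂ)⁻¹)) = (m : ℂ)⁻¹ := by ring
    rw [this, Complex.inv_cpow _ _ (by rw [Complex.natCast_arg]; exact Real.pi_pos.ne),
      Complex.cpow_neg]
    ring

theorem dbl_summable (s : ℂ) (hs : 1 < s.re) :
    Summable (fun q : ℕ × ℕ =>
      (ArithmeticFunction.moebius q.2 : ℂ) * (gK q.1 q.2 : ℂ) * pochNewton q.1 s) := by
  obtain ⟨p, hp1, hp2⟩ := exists_between (lt_min hs (by norm_num : (1 : ℝ) < 2))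
  have hps := hp2.trans_le (min_le_left _ _)
  have hp2' := hp2.trans_le (min_le_right _ _)
  obtain ⟨C, hC0, hC⟩ := pn_bound s (by linarith)
  have S1 : Summable fun n : ℕ => C * (n : ℝ) ^ (p - (s.re + 1)) :=
    (Real.summable_nat_rpow.mpr (by linarith)).mul_left C
  have S2 : Summable fun m : ℕ => (m : ℝ) ^ (-p) := Real.summable_nat_rpow.mpr (by linarith)
  have S := S1.mul_of_nonneg S2 (fun n => by positivity) (fun m => by positivity)
  refine Summable.of_norm_bounded S ?_
  rintro ⟨n, m⟩
  simp only
  rcases eq_or_ne n 0 with rfl | hn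
  · simp [gK]
    positivity
  have hn0 : (0 : ℝ) < n := by exact_mod_cast Nat.pos_of_ne_zero hn
  rw [norm_mul, norm_mul, Complex.norm_real, Real.norm_of_nonneg (gK_nonneg n m)]
  have hmu : ‖(ArithmeticFunction.moebius m : ℂ)‖ ≤ 1 := by
    rw [Complex.norm_intCast]
    exact_mod_cast ArithmeticFunction.abs_moebius_le_one
  have hg := gK_le n m p hp1.le hp2'.le
  calc _ ≤ 1 * ((n : ℝ) ^ p * (m : ℝ) ^ (-p)) * (C * (n : ℝ) ^ (-(s.re + 1))) := by
        gcongr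
        · exact gK_nonneg n m
        · exact hC n hn
    _ = _ := by
        rw [sub_eq_add_neg, Real.rpow_add hn0]; ring

/-- Newton interpolation of the reciprocal Riemann zeta function: for `Re s > 1`, the
Newton series `∑_{n} (∑_{k=0}^n P_k(n) w(k)) P_n(s)` converges to `1/ζ(s)`. -/
theorem newton_series_recip_zeta (s : ℂ) (hs : 1 < s.re) :
    Tendsto (fun N : ℕ => ∑ n ∈ Finset.range N,
        (∑ k ∈ Finset.range (n + 1), pochNewton k (n : ℂ) * recipZetaValue k) *
          pochNewton n s)
      atTop (𝓝 (riemannZeta s)⁻¹) := by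
  have S := dbl_summable s hs
  have h1 := S.hasSum.prod_fiberwise (fun n => (coeff_hasSum n).mul_right (pochNewton n s))
  have h2 := ((Equiv.prodComm ℕ ℕ).hasSum_iff.mpr S.hasSum).prod_fiberwise
    (fun m => col_hasSum s hs m)
  rw [h2.unique (moebius_hasSum s hs)] at h1
  have h3 := h1.add ((pn_hasSum s (by linarith)).mul_left (recipZetaValue 0))
  rw [mul_zero, add_zero] at h3
  refine h3.tendsto_sum_nat.congr fun N => Finset.sum_congr rfl fun n _ => ?_
  ring
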